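/- Let G be a simple graph on n ≥ 1 vertices with real adjacency matrix A, and let λ₁ denote the largest eigenvalue of A (which exists since A is a real symmetric matrix). Then n·λ₁² ≥ ∑_{v ∈ V(G)} d(v)², where d(v) denotes the degree of the vertex v. -/

import Mathlib

open SimpleGraph

/-!
Let `A` be a symmetric matrix with nonnegative entries, all of whose eigenvalues are at most `c`.
Passing to absolute values of coordinates gives `|xᵀ A x| ≤ |x|ᵀ A |x| ≤ c ‖x‖²`, so the quadratic
form of `A` is bounded on both sides. As `A` is symmetric, its operator norm is the supremum of its
absolute Rayleigh quotients, whence `‖A x‖ ≤ c ‖x‖`. For an adjacency matrix and the all-ones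
vector, the coordinates of `A x` are the degrees.
-/

section

open Matrix RCLike

open scoped InnerProductSpace MatrixOrder

theorem norm_apply_le_of_abs_re_inner_apply_self_le {𝕜 E : Type*} [RCLike 𝕜]
    [NormedAddCommGroup E] [InnerProductSpace 𝕜 E] {T : E →L[𝕜] E}
    (hT : (T : E →ₗ[𝕜] E).IsSymmetric) {c : ℝ} (hc : ∀ y, |re ⟪T y, y⟫_𝕜| ≤ c * ‖y‖ ^ 2) (x : E) :
    ‖T x‖ ≤ c * ‖x‖ := by
  obtain rfl | hx := eq_or_ne x 0
  · simp
  have hc₀ : 0 ≤ c :=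
    nonneg_of_mul_nonneg_left ((abs_nonneg _).trans (hc x)) (by positivity)
  have hquot (y : E) : |T.rayleighQuotient y| ≤ c := by
    rw [ContinuousLinearMap.rayleighQuotient, abs_div, abs_of_nonneg (sq_nonneg ‖y‖)]
    exact div_le_of_le_mul₀ (sq_nonneg _) hc₀ (hc y)
  have hnorm : ‖T‖ ≤ c := by
    rw [T.norm_eq_iSup_rayleighQuotient hT]
    exact ciSup_le hquot
  exact T.le_of_opNorm_le hnorm x

theorem re_dotProduct_mulVec_le_of_eigenvalues_le {𝕜 n : Type*} [RCLike 𝕜] [Fintype n]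
    [DecidableEq n] {A : Matrix n n 𝕜} (hA : A.IsHermitian) {c : ℝ}
    (hc : ∀ i, hA.eigenvalues i ≤ c) (x : n → 𝕜) :
    re (star x ⬝ᵥ (A *ᵥ x)) ≤ c * re (star x ⬝ᵥ x) := by
  have hle : A ≤ algebraMap ℝ (Matrix n n 𝕜) c := by
    refine le_algebraMap_of_spectrum_le ?_ hA.isSelfAdjoint
    rw [hA.spectrum_real_eq_range_eigenvalues]
    exact Set.forall_mem_range.mpr hc
  have hpos := (Matrix.le_iff.mp hle).re_dotProduct_nonneg x
  rwa [Algebra.algebraMap_eq_smul_one, sub_mulVec, smul_mulVec, one_mulVec, dotProduct_sub,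
    dotProduct_smul, map_sub, smul_re, sub_nonneg] at hpos

theorem abs_dotProduct_mulVec_le {m n R : Type*} [Fintype m] [Fintype n] [Ring R]
    [LinearOrder R] [IsOrderedRing R] {A : Matrix m n R} (hA : ∀ i j, 0 ≤ A i j)
    (x : m → R) (y : n → R) :
    |x ⬝ᵥ (A *ᵥ y)| ≤ |x| ⬝ᵥ (A *ᵥ |y|) := by
  have hmulVec (i : m) : |(A *ᵥ y) i| ≤ (A *ᵥ |y|) i :=
    (Finset.abs_sum_le_sum_abs _ _).trans_eq <| Finset.sum_congr rfl fun j _ ↦ by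
      rw [abs_mul, abs_of_nonneg (hA i j), Pi.abs_apply]
  calc
    |x ⬝ᵥ (A *ᵥ y)| ≤ ∑ i, |x i * (A *ᵥ y) i| := Finset.abs_sum_le_sum_abs _ _
    _ = ∑ i, |x i| * |(A *ᵥ y) i| := by simp only [abs_mul]
    _ ≤ |x| ⬝ᵥ (A *ᵥ |y|) :=
      Finset.sum_le_sum fun i _ ↦ mul_le_mul_of_nonneg_left (hmulVec i) (abs_nonneg _)

theorem norm_toEuclideanCLM_apply_le_of_eigenvalues_le {n : Type*} [Fintype n] [DecidableEq n]
    {A : Matrix n n ℝ} (hA : A.IsHermitian) (hpos : ∀ i j, 0 ≤ A i j) {c : ℝ}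
    (hc : ∀ i, hA.eigenvalues i ≤ c) (x : EuclideanSpace ℝ n) :
    ‖toEuclideanCLM (𝕜 := ℝ) A x‖ ≤ c * ‖x‖ := by
  refine norm_apply_le_of_abs_re_inner_apply_self_le
    (isSymmetric_toEuclideanLin_iff.mpr hA) (fun y ↦ ?_) x
  have hform : ⟪toEuclideanCLM (𝕜 := ℝ) A y, y⟫_ℝ = y.ofLp ⬝ᵥ (A *ᵥ y.ofLp) := by
    simp only [EuclideanSpace.inner_eq_star_dotProduct, ofLp_toEuclideanCLM, star_trivial]
  have hsq : |y.ofLp| ⬝ᵥ |y.ofLp| = ‖y‖ ^ 2 := by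
    simp only [dotProduct, Pi.abs_apply, EuclideanSpace.real_norm_sq_eq, ← pow_two, sq_abs]
  calc
    |⟪toEuclideanCLM (𝕜 := ℝ) A y, y⟫_ℝ| = |y.ofLp ⬝ᵥ (A *ᵥ y.ofLp)| := by rw [hform]
    _ ≤ |y.ofLp| ⬝ᵥ (A *ᵥ |y.ofLp|) := abs_dotProduct_mulVec_le hpos _ _
    _ ≤ c * (|y.ofLp| ⬝ᵥ |y.ofLp|) := re_dotProduct_mulVec_le_of_eigenvalues_le hA hc |y.ofLp|
    _ = c * ‖y‖ ^ 2 := by rw [hsq]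

end

theorem stmt_3 {V : Type*} [Fintype V] [DecidableEq V] (n : ℕ) (hn : 1 ≤ n)
    (hcard : Fintype.card V = n)
    (G : SimpleGraph V) [DecidableRel G.Adj]
    (hA : (G.adjMatrix ℝ).IsHermitian)
    (lam : ℝ) (hlam : IsGreatest (Set.range hA.eigenvalues) lam) :
    (n : ℝ) * lam ^ 2 ≥ ∑ v : V, (G.degree v : ℝ) ^ 2 := by
  let ones : EuclideanSpace ℝ V := WithLp.toLp 2 (Function.const V 1)
  have hpos (u v : V) : 0 ≤ G.adjMatrix ℝ u v := by
    rw [adjMatrix_apply]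
    positivity
  have hle : ‖Matrix.toEuclideanCLM (𝕜 := ℝ) (G.adjMatrix ℝ) ones‖ ≤ lam * ‖ones‖ :=
    norm_toEuclideanCLM_apply_le_of_eigenvalues_le hA hpos (Set.forall_mem_range.mp hlam.2) ones
  have hones : ‖ones‖ ^ 2 = n := by
    simp [ones, EuclideanSpace.real_norm_sq_eq, hcard]
  calc
    ∑ v : V, (G.degree v : ℝ) ^ 2 = ‖Matrix.toEuclideanCLM (𝕜 := ℝ) (G.adjMatrix ℝ) ones‖ ^ 2 := by
      simp only [EuclideanSpace.real_norm_sq_eq, Matrix.ofLp_toEuclideanCLM, ones,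
        adjMatrix_mulVec_const_apply, mul_one]
    _ ≤ (lam * ‖ones‖) ^ 2 := by gcongr
    _ = n * lam ^ 2 := by rw [mul_pow, hones, mul_comm]
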